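/- Let w : ℝ² → ℝ² be of the form w = p + q, where both components of p are affine functions and q ∈ Ŝ(K) (both components polynomials of total degree at most 2 with q(x)·nᵢ = 0 for all x ∈ eᵢ, i ∈ {1,2,3}). Suppose w satisfies: (i) ∫_{eᵢ} γ (w · nᵢ) ds = 0 for every affine γ : ℝ² → ℝ and each i ∈ {1,2,3}; (ii) ∫_K ∇γ · w dx = 0 for every affine γ : ℝ² → ℝ; and (iii) ∫_K ∇⊥(λ₁λ₂λ₃) · w dx = 0. Then w = 0. -/

import Mathlib

open MeasureTheory

noncomputable section

/-- Dot product on `ℝ²`. -/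
def dot (a b : ℝ × ℝ) : ℝ := a.1 * b.1 + a.2 * b.2

/-- Evaluation of a two-variable polynomial at a point of `ℝ²`. -/
def pev (P : MvPolynomial (Fin 2) ℝ) (x : ℝ × ℝ) : ℝ :=
  MvPolynomial.eval ![x.1, x.2] P

/-- Gradient `∇g = (∂g/∂x₁, ∂g/∂x₂)` of `g : ℝ² → ℝ`. -/
def grad2 (g : ℝ × ℝ → ℝ) (x : ℝ × ℝ) : ℝ × ℝ :=
  (fderiv ℝ g x (1, 0), fderiv ℝ g x (0, 1))

/-- Skew gradient `∇⊥g = (−∂g/∂x₂, ∂g/∂x₁)` of `g : ℝ² → ℝ`. -/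
def perpGrad (g : ℝ × ℝ → ℝ) (x : ℝ × ℝ) : ℝ × ℝ :=
  (-(fderiv ℝ g x (0, 1)), fderiv ℝ g x (1, 0))

/-- Line integral `∫_{[a,b]} h ds = ‖b − a‖ ∫₀¹ h((1−s)a + sb) ds`
(Euclidean length). -/
def lineIntegral (h : ℝ × ℝ → ℝ) (a b : ℝ × ℝ) : ℝ :=
  Real.sqrt ((b.1 - a.1) ^ 2 + (b.2 - a.2) ^ 2) *
    ∫ s in (0 : ℝ)..1, h ((1 - s) • a + s • b)

/-!
Testing the edge moments against `γ = p · nᵢ` gives `∫ (p · nᵢ)² = 0`, so `p` is parallel to each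
edge along that edge. At a vertex it is then parallel to two edges, hence zero, and an affine map
vanishing at the vertices is zero: `w = q`.

Quadratic Lagrange interpolation at the vertices and edge midpoints shows that
`w = ∑ cᵢ φᵢ tᵢ` with `φᵢ = λⱼ λₖ` the edge bubbles and `tᵢ` the edge vectors. The affine
symmetries of `K` permute the `φᵢ`, so all `∫_K φᵢ` agree, and they are positive; the interior
moments therefore say `∑ cᵢ tᵢ = 0`, and all `cᵢ` equal some `c` because `∑ tᵢ = 0` is the only
relation between the edge vectors.

Both `∇⊥λᵢ` and `tᵢ` span the kernel of the linear part of `λᵢ`, and both sum to zero over `i`, so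
`∇⊥λᵢ = κ tᵢ` with one `κ ≠ 0`. By the product rule `∇⊥(λ₀λ₁λ₂) = κ ∑ φᵢ tᵢ`, whence the last moment
is `c κ ∫_K |∑ φᵢ tᵢ|²` and `c = 0`.
-/

section FinThree

variable {α : Type*}

theorem range_fin_three (f : Fin 3 → α) : Set.range f = {f 0, f 1, f 2} := by
  ext
  simp [Fin.exists_fin_succ, eq_comm]

theorem apply_eq_apply_zero_of_cyclic {f : Fin 3 → α} (hf : ∀ i, f (i + 1) = f (i + 2))
    (i : Fin 3) : f i = f 0 := by
  fin_cases i
  exacts [rfl, (hf 2).symm, hf 1]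

end FinThree

section AffineBasis

variable {ι k V P V' P' : Type*} [Fintype ι] [Field k]
  [AddCommGroup V] [Module k V] [AddTorsor V P] [AddCommGroup V'] [Module k V'] [AddTorsor V' P']

/-- The affine map sending each point to the point with the same barycentric coordinates with
respect to another affine basis. -/
def coordTransport (b : AffineBasis ι k P) (b' : AffineBasis ι k P') : P →ᵃ[k] P' :=
  (Finset.univ.affineCombination k b').comp b.coords

@[simp]
theorem coord_coordTransport (b : AffineBasis ι k P) (b' : AffineBasis ι k P') (i : ι) (x : P) :
    b'.coord i (coordTransport b b' x) = b.coord i x :=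
  b'.coord_apply_combination_of_mem (Finset.mem_univ i) (b.sum_coord_apply_eq_one x)

theorem coordTransport_apply_self (b : AffineBasis ι k P) (b' : AffineBasis ι k P') (i : ι) :
    coordTransport b b' (b i) = b' i := by
  classical
  exact b'.ext_elem fun j => by simp only [coord_coordTransport, AffineBasis.coord_apply]

theorem coordTransport_bijective (b : AffineBasis ι k P) (b' : AffineBasis ι k P') :
    Function.Bijective (coordTransport b b') :=
  Function.bijective_iff_has_inverse.2 ⟨coordTransport b' b,
    fun _ => b.ext_elem fun _ => by simp only [coord_coordTransport],
    fun _ => b'.ext_elem fun _ => by simp only [coord_coordTransport]⟩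

theorem affineMap_apply_eq_sum_coord_smul (b : AffineBasis ι k P) (f : P →ᵃ[k] V') (x : P) :
    f x = ∑ i, b.coord i x • f (b i) := by
  conv_lhs => rw [← b.affineCombination_coord_eq_self x]
  rw [Finset.map_affineCombination _ _ _ (b.sum_coord_apply_eq_one x),
    Finset.univ.affineCombination_eq_linear_combination _ _ (b.sum_coord_apply_eq_one x)]
  rfl

theorem sum_coord_linear_apply (b : AffineBasis ι k P) (u : V) :
    ∑ i, (b.coord i).linear u = 0 := by
  obtain ⟨x⟩ : Nonempty P := inferInstance
  have hdiff (i : ι) : (b.coord i).linear u = b.coord i (u +ᵥ x) - b.coord i x := by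
    rw [AffineMap.map_vadd, vadd_eq_add, add_sub_cancel_right]
  simp only [hdiff, Finset.sum_sub_distrib, b.sum_coord_apply_eq_one, sub_self]

theorem exists_affineBasis_coe_eq [FiniteDimensional k V] {v : ι → P} (hv : AffineIndependent k v)
    (hcard : Fintype.card ι = Module.finrank k V + 1) : ∃ b : AffineBasis ι k P, ⇑b = v :=
  ⟨⟨v, hv, hv.affineSpan_eq_top_iff_card_eq_finrank_add_one.2 hcard⟩, rfl⟩

end AffineBasis

theorem eq_coord_of_apply_eq_ite {ι k V P : Type*} [Finite ι] [DecidableEq ι] [Field k]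
    [AddCommGroup V] [Module k V] [AddTorsor V P] (b : AffineBasis ι k P) {f : ι → P →ᵃ[k] k}
    (hf : ∀ i j, f i (b j) = if i = j then 1 else 0) : f = b.coord := by
  have := Fintype.ofFinite ι
  ext i x
  simp [affineMap_apply_eq_sum_coord_smul b (f i) x, hf]

section ConvexHull

variable {ι E : Type*} [NormedAddCommGroup E] [NormedSpace ℝ E] (b : AffineBasis ι ℝ E)

theorem midpoint_mem_convexHull_range (i j : ι) :
    midpoint ℝ (b i) (b j) ∈ convexHull ℝ (Set.range b) :=
  (convex_convexHull ℝ _).midpoint_mem (subset_convexHull ℝ _ (Set.mem_range_self i))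
    (subset_convexHull ℝ _ (Set.mem_range_self j))

variable [Finite ι]

theorem isCompact_convexHull_range : IsCompact (convexHull ℝ (Set.range b)) :=
  (Set.finite_range b).isCompact_convexHull ℝ

theorem interior_convexHull_range_nonempty : (interior (convexHull ℝ (Set.range b))).Nonempty :=
  have := b.finiteDimensional
  interior_convexHull_nonempty_iff_affineSpan_eq_top.2 b.tot

theorem convexHull_range_subset_closure_interior :
    convexHull ℝ (Set.range b) ⊆ closure (interior (convexHull ℝ (Set.range b))) := by
  rw [(convex_convexHull ℝ _).closure_interior_eq_closure_of_nonempty_interior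
    (interior_convexHull_range_nonempty b)]
  exact subset_closure

end ConvexHull

section SetIntegral

theorem eqOn_zero_of_setIntegral_eq_zero {X : Type*} [TopologicalSpace X] [T2Space X]
    [MeasurableSpace X] [BorelSpace X] {μ : Measure X} [μ.IsOpenPosMeasure]
    [IsFiniteMeasureOnCompacts μ] {K : Set X} (hK : IsCompact K) (hKi : K ⊆ closure (interior K))
    {f : X → ℝ} (hf : ContinuousOn f K) (hf_nonneg : ∀ x ∈ K, 0 ≤ f x)
    (hint : ∫ x in K, f x ∂μ = 0) : Set.EqOn f 0 K := by
  have hae : f =ᵐ[μ.restrict K] 0 :=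
    (setIntegral_eq_zero_iff_of_nonneg_ae
      (ae_restrict_of_forall_mem hK.measurableSet hf_nonneg) (hf.integrableOn_compact hK)).1 hint
  exact Measure.eqOn_of_ae_eq hae hf (continuous_zero (X := X)).continuousOn hKi

variable {E F : Type*} [NormedAddCommGroup E] [NormedSpace ℝ E] [FiniteDimensional ℝ E]
  [NormedAddCommGroup F] [NormedSpace ℝ F]

theorem hasFDerivAt_affineMap (e : E →ᵃ[ℝ] F) (x : E) :
    HasFDerivAt e (LinearMap.toContinuousLinearMap e.linear) x := by
  rw [e.decomp]
  exact (LinearMap.toContinuousLinearMap e.linear).hasFDerivAt.add_const _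

variable [MeasurableSpace E] [BorelSpace E] (μ : Measure E) [μ.IsAddHaarMeasure]

theorem setIntegral_image_affineMap (e : E →ᵃ[ℝ] E) (he : Function.Injective e) {s : Set E}
    (hs : MeasurableSet s) (f : E → F) :
    ∫ x in e '' s, f x ∂μ = |LinearMap.det e.linear| • ∫ x in s, f (e x) ∂μ := by
  rw [integral_image_eq_integral_abs_det_fderiv_smul μ hs
    (fun x _ => (hasFDerivAt_affineMap e x).hasFDerivWithinAt) he.injOn f, integral_smul]
  rfl

theorem setIntegral_comp_affineMap_of_image_eq (e : E →ᵃ[ℝ] E) (he : Function.Injective e)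
    {s : Set E} (hs : MeasurableSet s) (hs_zero : μ s ≠ 0) (hs_top : μ s ≠ ⊤) (hes : e '' s = s)
    (f : E → F) : ∫ x in s, f (e x) ∂μ = ∫ x in s, f x ∂μ := by
  have hdet : |LinearMap.det e.linear| = 1 := by
    have hμ : μ.real s ≠ 0 := (measureReal_ne_zero_iff hs_top).2 hs_zero
    simpa [hes, hμ] using setIntegral_image_affineMap μ e he hs (fun _ => (1 : ℝ))
  simpa [hes, hdet] using (setIntegral_image_affineMap μ e he hs f).symm

variable {ι : Type*} [Finite ι] (b : AffineBasis ι ℝ E)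

theorem setIntegral_coords_comp_perm (σ : Equiv.Perm ι) (f : (ι → ℝ) → F) :
    ∫ x in convexHull ℝ (Set.range b), f (b.coords x ∘ σ) ∂μ =
      ∫ x in convexHull ℝ (Set.range b), f (b.coords x) ∂μ := by
  have := Fintype.ofFinite ι
  let e := coordTransport (b.reindex σ.symm) b
  have he_image : e '' convexHull ℝ (Set.range b) = convexHull ℝ (Set.range b) := by
    have hrange : e '' Set.range b = Set.range b := by
      have hcomp : e ∘ b.reindex σ.symm = b := funext (coordTransport_apply_self _ b)
      have hreindex : Set.range (b.reindex σ.symm) = Set.range b := σ.surjective.range_comp b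
      rw [← hreindex, ← Set.range_comp, hcomp, hreindex]
    rw [AffineMap.image_convexHull, hrange]
  have he_coords (x : E) : b.coords (e x) = b.coords x ∘ σ := by
    ext i
    simp [e]
  have hcompact := isCompact_convexHull_range b
  have hinvariant := setIntegral_comp_affineMap_of_image_eq μ e (coordTransport_bijective _ b).1
    hcompact.measurableSet (Measure.measure_pos_of_nonempty_interior μ
      (interior_convexHull_range_nonempty b)).ne' hcompact.measure_ne_top he_image (f ∘ b.coords)
  simpa only [Function.comp_apply, he_coords] using hinvariant

end SetIntegral

theorem mem_span_singleton_of_apply_eq_zero {k V : Type*} [Field k] [AddCommGroup V] [Module k V]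
    (hV : Module.finrank k V = 2) {f : Module.Dual k V} (hf : f ≠ 0) {t u : V} (ht : t ≠ 0)
    (hft : f t = 0) (hfu : f u = 0) : u ∈ Submodule.span k {t} := by
  have : FiniteDimensional k V := .of_finrank_pos (by omega)
  have hker : Module.finrank k (LinearMap.ker f) = 1 := by
    have := Module.Dual.finrank_ker_add_one_of_ne_zero hf
    omega
  obtain ⟨c, hc⟩ := (finrank_eq_one_iff_of_nonzero' (⟨t, hft⟩ : LinearMap.ker f)
    fun h => ht (congrArg Subtype.val h)).1 hker ⟨u, hfu⟩
  exact Submodule.mem_span_singleton.2 ⟨c, congrArg Subtype.val hc⟩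

section Triangle

variable {V W : Type*} [AddCommGroup V] [Module ℝ V] [AddCommGroup W] [Module ℝ W]
  (b : AffineBasis (Fin 3) ℝ V)

/-- The tangent vector of the edge opposite vertex `i` of a triangle, oriented so that the three
tangent vectors add up to zero. -/
def edge (i : Fin 3) : V := b (i + 2) - b (i + 1)

theorem coord_linear_edge (i j : Fin 3) :
    (b.coord i).linear (edge b j) =
      (if i = j + 2 then 1 else 0) - (if i = j + 1 then 1 else 0) := by
  simpa [edge, AffineBasis.coord_apply] using
    (b.coord i).linearMap_vsub (b (j + 2)) (b (j + 1))

theorem coord_linear_ne_zero (i : Fin 3) : (b.coord i).linear ≠ 0 := fun h => by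
  have := coord_linear_edge b i (i + 1)
  fin_cases i <;> simp_all

theorem coord_linear_sum_smul_edge (c : Fin 3 → ℝ) (i : Fin 3) :
    (b.coord i).linear (∑ j, c j • edge b j) = c (i + 1) - c (i + 2) := by
  fin_cases i <;>
    simp [-AffineBasis.linear_eq_sumCoords, Fin.sum_univ_three, coord_linear_edge, sub_eq_add_neg,
      add_comm]

theorem edge_ne_zero (i : Fin 3) : edge b i ≠ 0 :=
  sub_ne_zero.2 (b.ind.injective.ne (by simp))

theorem mem_span_edge_of_apply_eq_zero {f : Module.Dual ℝ V} (hf : f ≠ 0) {i : Fin 3}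
    (hi : f (edge b i) = 0) {u : V} (hu : f u = 0) : u ∈ Submodule.span ℝ {edge b i} := by
  have hcard := b.card_eq_finrank_add_one
  exact mem_span_singleton_of_apply_eq_zero (by simpa using hcard.symm) hf (edge_ne_zero b i) hi hu

theorem eq_zero_of_mem_span_edge {i : Fin 3} {u : V} (h₁ : u ∈ Submodule.span ℝ {edge b (i + 1)})
    (h₂ : u ∈ Submodule.span ℝ {edge b (i + 2)}) : u = 0 := by
  obtain ⟨c, rfl⟩ := Submodule.mem_span_singleton.1 h₁
  obtain ⟨d, hd⟩ := Submodule.mem_span_singleton.1 h₂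
  have hc : c = 0 := by
    have := congrArg (b.coord (i + 2)).linear hd
    fin_cases i <;> simpa [-AffineBasis.linear_eq_sumCoords, coord_linear_edge] using this.symm
  rw [hc, zero_smul]

/-- The BDFM edge condition in a form free of unit normals: along each edge of the triangle the
values of `q` are parallel to that edge, i.e. the normal component of `q` vanishes there. -/
def IsTangential (q : V → V) : Prop :=
  ∀ i, ∀ x ∈ segment ℝ (b (i + 1)) (b (i + 2)), q x ∈ Submodule.span ℝ {edge b i}

variable {b}

theorem IsTangential.apply_vertex_eq_zero {q : V → V} (hq : IsTangential b q) (i : Fin 3) :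
    q (b i) = 0 := by
  apply eq_zero_of_mem_span_edge b (i := i)
  · refine hq (i + 1) (b i) ?_
    rw [show i + 1 + 2 = i by fin_cases i <;> rfl]
    exact right_mem_segment ..
  · refine hq (i + 2) (b i) ?_
    rw [show i + 2 + 1 = i by fin_cases i <;> rfl]
    exact left_mem_segment ..

theorem IsTangential.affineMap_eq_zero {p : V →ᵃ[ℝ] V} (hp : IsTangential b p) : p = 0 := by
  ext x
  simp [affineMap_apply_eq_sum_coord_smul b p x, hp.apply_vertex_eq_zero]

variable (b)

/-- The quadratic bubble `λⱼ λₖ` of the edge opposite vertex `i`, where `{i, j, k} = {0, 1, 2}`. -/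
def edgeBubble (i : Fin 3) (x : V) : ℝ := b.coord (i + 1) x * b.coord (i + 2) x

theorem edgeBubble_midpoint (i j : Fin 3) :
    edgeBubble b j (midpoint ℝ (b (i + 1)) (b (i + 2))) = if j = i then 4⁻¹ else 0 := by
  simp only [edgeBubble, AffineMap.map_midpoint, AffineBasis.coord_apply]
  fin_cases i <;> fin_cases j <;> simp [midpoint_eq_smul_add] <;> norm_num

/-- The quadratic vector field whose restriction to each edge of the triangle is the bubble of that
edge times its tangent vector. Up to a scalar it is the skew gradient of the cubic bubble. -/
def edgeBubbleField (x : V) : V := ∑ i, edgeBubble b i x • edge b i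

theorem edgeBubbleField_midpoint (i : Fin 3) :
    edgeBubbleField b (midpoint ℝ (b (i + 1)) (b (i + 2))) = (4⁻¹ : ℝ) • edge b i := by
  simp [edgeBubbleField, edgeBubble_midpoint]

variable (V W) in
/-- The vector-valued functions of total degree at most two on a vector space, as the span of the
products of an affine function and an affine map. -/
def quadraticFunctions : Submodule ℝ (V → W) :=
  Submodule.span ℝ {f | ∃ (g : V →ᵃ[ℝ] ℝ) (h : V →ᵃ[ℝ] W), f = fun x => g x • h x}

theorem quadratic_eq_sum_vertex_add_sum_midpoint {q : V → W} (hq : q ∈ quadraticFunctions V W)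
    (x : V) :
    q x = ∑ i, (b.coord i x * (2 * b.coord i x - 1)) • q (b i) +
      ∑ i, (4 * edgeBubble b i x) • q (midpoint ℝ (b (i + 1)) (b (i + 2))) := by
  induction hq using Submodule.span_induction with
  | mem f hf =>
    obtain ⟨g, h, rfl⟩ := hf
    have hsum : b.coord 0 x = 1 - b.coord 1 x - b.coord 2 x := by
      have := b.sum_coord_apply_eq_one x
      rw [Fin.sum_univ_three] at this
      linarith
    simp only [AffineMap.map_midpoint]
    simp only [affineMap_apply_eq_sum_coord_smul b g x, affineMap_apply_eq_sum_coord_smul b h x,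
      midpoint_eq_smul_add, Fin.sum_univ_three, edgeBubble, hsum,
      smul_eq_mul, invOf_eq_inv, Fin.isValue, Fin.reduceAdd, zero_add]
    module
  | zero => simp
  | add f g _ _ hf hg =>
    simp only [Pi.add_apply, smul_add, Finset.sum_add_distrib, hf, hg]
    abel
  | smul c f _ hf =>
    simp only [Pi.smul_apply, smul_comm _ c, ← Finset.smul_sum, ← smul_add, hf]

variable {b}

theorem IsTangential.exists_eq_sum_edgeBubble_smul_edge {q : V → V}
    (hq : q ∈ quadraticFunctions V V) (hqb : IsTangential b q) :
    ∃ c : Fin 3 → ℝ, ∀ x, q x = ∑ i, (c i * edgeBubble b i x) • edge b i := by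
  have hmid (i : Fin 3) : ∃ c : ℝ, c • edge b i = q (midpoint ℝ (b (i + 1)) (b (i + 2))) :=
    Submodule.mem_span_singleton.1 (hqb i _ (midpoint_mem_segment _ _))
  choose c hc using hmid
  refine ⟨fun i => 4 * c i, fun x => ?_⟩
  simp only [quadratic_eq_sum_vertex_add_sum_midpoint b hq x, hqb.apply_vertex_eq_zero, ← hc,
    smul_zero, Finset.sum_const_zero, zero_add, smul_smul, mul_right_comm]

end Triangle

section EdgeBubbleMoments

variable {E : Type*} [NormedAddCommGroup E] [NormedSpace ℝ E] [FiniteDimensional ℝ E]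
  (b : AffineBasis (Fin 3) ℝ E)

theorem continuous_edgeBubble (i : Fin 3) : Continuous (edgeBubble b i) :=
  (continuous_barycentric_coord b _).mul (continuous_barycentric_coord b _)

theorem continuous_edgeBubbleField : Continuous (edgeBubbleField b) :=
  continuous_finsetSum _ fun i _ => (continuous_edgeBubble b i).smul continuous_const

variable [MeasurableSpace E] [BorelSpace E] (μ : Measure E) [μ.IsAddHaarMeasure]

theorem setIntegral_edgeBubble_eq (i j : Fin 3) :
    ∫ x in convexHull ℝ (Set.range b), edgeBubble b i x ∂μ =
      ∫ x in convexHull ℝ (Set.range b), edgeBubble b j x ∂μ := by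
  have hperm := setIntegral_coords_comp_perm μ b (Equiv.addRight (i - j))
    fun t => t (j + 1) * t (j + 2)
  have hshift (k : Fin 3) : j + k + (i - j) = i + k := by abel
  simpa only [Function.comp_apply, Equiv.coe_addRight, hshift, AffineBasis.coords_apply,
    edgeBubble] using hperm

theorem setIntegral_edgeBubble_ne_zero (i : Fin 3) :
    ∫ x in convexHull ℝ (Set.range b), edgeBubble b i x ∂μ ≠ 0 := by
  intro hint
  have hnonneg : ∀ x ∈ convexHull ℝ (Set.range b), 0 ≤ edgeBubble b i x := by
    rw [b.convexHull_eq_nonneg_coord]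
    exact fun x hx => mul_nonneg (hx _) (hx _)
  have hmid := eqOn_zero_of_setIntegral_eq_zero (isCompact_convexHull_range b)
    (convexHull_range_subset_closure_interior b) (continuous_edgeBubble b i).continuousOn
    hnonneg hint (midpoint_mem_convexHull_range b (i + 1) (i + 2))
  simp [edgeBubble_midpoint] at hmid

variable {b}

theorem IsTangential.exists_eq_smul_edgeBubbleField {q : E → E} (hq : q ∈ quadraticFunctions E E)
    (hqb : IsTangential b q)
    (hint : ∀ f : Module.Dual ℝ E, ∫ x in convexHull ℝ (Set.range b), f (q x) ∂μ = 0) :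
    ∃ c : ℝ, ∀ x, q x = c • edgeBubbleField b x := by
  obtain ⟨c, hc⟩ := hqb.exists_eq_sum_edgeBubble_smul_edge hq
  have hintegrable (i : Fin 3) : Integrable (fun x => c i * edgeBubble b i x)
      (μ.restrict (convexHull ℝ (Set.range b))) :=
    ((continuous_edgeBubble b i).const_mul (c i)).continuousOn.integrableOn_compact
      (isCompact_convexHull_range b)
  have hsucc (i : Fin 3) : c (i + 1) = c (i + 2) := by
    have hi := hint (b.coord i).linear
    simp only [hc, coord_linear_sum_smul_edge] at hi
    rw [integral_sub (hintegrable _) (hintegrable _), integral_const_mul, integral_const_mul,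
      setIntegral_edgeBubble_eq b μ (i + 1) (i + 2), sub_eq_zero] at hi
    exact mul_right_cancel₀ (setIntegral_edgeBubble_ne_zero b μ _) hi
  have hconst := apply_eq_apply_zero_of_cyclic hsucc
  exact ⟨c 0, fun x => by simp only [hc, hconst, edgeBubbleField, Finset.smul_sum, smul_smul]⟩

end EdgeBubbleMoments

section PlaneCalculus

/-- The linear functional `u ↦ u · n` on the plane. -/
def dotLinear (n : ℝ × ℝ) : Module.Dual ℝ (ℝ × ℝ) :=
  n.1 • LinearMap.fst ℝ ℝ ℝ + n.2 • LinearMap.snd ℝ ℝ ℝ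

@[simp]
theorem dotLinear_apply (n u : ℝ × ℝ) : dotLinear n u = dot u n := by
  simp [dotLinear, dot, mul_comm]

theorem dot_comm (u v : ℝ × ℝ) : dot u v = dot v u := by
  simp only [dot, mul_comm]

theorem dot_add_left (u v n : ℝ × ℝ) : dot (u + v) n = dot u n + dot v n := by
  simpa using (dotLinear n).map_add u v

theorem dot_smul_smul (r s : ℝ) (u v : ℝ × ℝ) : dot (r • u) (s • v) = r * s * dot u v := by
  simp only [dot, Prod.smul_fst, Prod.smul_snd, smul_eq_mul]
  ring

theorem dot_self_nonneg (u : ℝ × ℝ) : 0 ≤ dot u u :=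
  add_nonneg (mul_self_nonneg _) (mul_self_nonneg _)

theorem dot_self_eq_zero {u : ℝ × ℝ} : dot u u = 0 ↔ u = 0 := by
  rw [dot, mul_self_add_mul_self_eq_zero, Prod.ext_iff]
  rfl

theorem dotLinear_ne_zero {n : ℝ × ℝ} (hn : n ≠ 0) : dotLinear n ≠ 0 := fun h =>
  hn (dot_self_eq_zero.1 (by rw [← dotLinear_apply, h, LinearMap.zero_apply]))

theorem linearMap_apply_eq_mul_add_mul (f : Module.Dual ℝ (ℝ × ℝ)) (u : ℝ × ℝ) :
    f u = u.1 * f (1, 0) + u.2 * f (0, 1) := by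
  rw [← smul_eq_mul, ← smul_eq_mul, ← map_smul, ← map_smul, ← map_add]
  simp

theorem dot_grad2 (g : ℝ × ℝ → ℝ) (x u : ℝ × ℝ) : dot (grad2 g x) u = fderiv ℝ g x u := by
  refine Eq.trans ?_ (linearMap_apply_eq_mul_add_mul (fderiv ℝ g x : Module.Dual ℝ (ℝ × ℝ)) u).symm
  simp [dot, grad2, mul_comm]

theorem fderiv_perpGrad_self (g : ℝ × ℝ → ℝ) (x : ℝ × ℝ) : fderiv ℝ g x (perpGrad g x) = 0 := by
  rw [← dot_grad2, dot, grad2, perpGrad]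
  ring

theorem perpGrad_mul {g h : ℝ × ℝ → ℝ} {x : ℝ × ℝ} (hg : DifferentiableAt ℝ g x)
    (hh : DifferentiableAt ℝ h x) :
    perpGrad (fun y => g y * h y) x = g x • perpGrad h x + h x • perpGrad g x := by
  simp only [perpGrad, fderiv_fun_mul hg hh, add_apply, smul_apply]
  ext <;> simp
  ring

theorem fderiv_affineMap_apply (γ : (ℝ × ℝ) →ᵃ[ℝ] ℝ) (x u : ℝ × ℝ) :
    fderiv ℝ γ x u = γ.linear u := by
  rw [(hasFDerivAt_affineMap γ x).fderiv, LinearMap.coe_toContinuousLinearMap']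

theorem perpGrad_affineMap (γ : (ℝ × ℝ) →ᵃ[ℝ] ℝ) (x : ℝ × ℝ) :
    perpGrad γ x = (-γ.linear (0, 1), γ.linear (1, 0)) := by
  simp only [perpGrad, fderiv_affineMap_apply]

end PlaneCalculus

section PlaneTriangle

variable (b : AffineBasis (Fin 3) ℝ (ℝ × ℝ))

theorem mem_span_edge_of_dot_eq_zero {i : Fin 3} {n u : ℝ × ℝ} (hn : n ≠ 0)
    (hi : dot n (edge b i) = 0) (hu : dot u n = 0) : u ∈ Submodule.span ℝ {edge b i} :=
  mem_span_edge_of_apply_eq_zero b (dotLinear_ne_zero hn) (by rwa [dotLinear_apply, dot_comm])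
    (by rwa [dotLinear_apply])

theorem exists_perpGrad_coord_eq_smul_edge :
    ∃ κ : ℝ, κ ≠ 0 ∧ ∀ i x, perpGrad (b.coord i) x = κ • edge b i := by
  have hparallel (i : Fin 3) : ∃ c : ℝ, c • edge b i = perpGrad (b.coord i) 0 := by
    refine Submodule.mem_span_singleton.1 (mem_span_edge_of_apply_eq_zero b
      (coord_linear_ne_zero b i) ?_ ?_)
    · fin_cases i <;> simp [-AffineBasis.linear_eq_sumCoords, coord_linear_edge]
    · rw [← fderiv_affineMap_apply _ 0, fderiv_perpGrad_self]
  choose c hc using hparallel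
  have hsum : ∑ i, c i • edge b i = 0 := by
    simp only [hc, perpGrad_affineMap]
    ext <;> simp [-AffineBasis.linear_eq_sumCoords, Prod.fst_sum, Prod.snd_sum,
      sum_coord_linear_apply]
  have hsucc (i : Fin 3) : c (i + 1) = c (i + 2) := by
    rw [← sub_eq_zero, ← coord_linear_sum_smul_edge b c i, hsum, map_zero]
  have hconst := apply_eq_apply_zero_of_cyclic hsucc
  refine ⟨c 0, fun h0 => coord_linear_ne_zero b 0 ?_, fun i x => ?_⟩
  · have hperp : perpGrad (b.coord 0) 0 = 0 := by rw [← hc, h0, zero_smul]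
    rw [perpGrad_affineMap, Prod.mk_eq_zero, neg_eq_zero] at hperp
    ext <;> simp [-AffineBasis.linear_eq_sumCoords, hperp]
  · rw [← hconst i, hc, perpGrad_affineMap, perpGrad_affineMap]

theorem exists_perpGrad_prod_coord_eq_smul_edgeBubbleField :
    ∃ κ : ℝ, κ ≠ 0 ∧ ∀ x, perpGrad (fun y => b.coord 0 y * b.coord 1 y * b.coord 2 y) x =
      κ • edgeBubbleField b x := by
  obtain ⟨κ, hκ, hperp⟩ := exists_perpGrad_coord_eq_smul_edge b
  refine ⟨κ, hκ, fun x => ?_⟩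
  have hdiff (i : Fin 3) : DifferentiableAt ℝ (b.coord i) x :=
    (hasFDerivAt_affineMap (b.coord i) x).differentiableAt
  rw [perpGrad_mul ((hdiff 0).fun_mul (hdiff 1)) (hdiff 2), perpGrad_mul (hdiff 0) (hdiff 1)]
  simp only [hperp, edgeBubbleField, edgeBubble, Fin.sum_univ_three, Fin.isValue, Fin.reduceAdd,
    zero_add]
  module

theorem setIntegral_dot_edgeBubbleField_self_ne_zero :
    ∫ x in convexHull ℝ (Set.range b), dot (edgeBubbleField b x) (edgeBubbleField b x) ≠ 0 := by
  intro hint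
  have hfst := (continuous_edgeBubbleField b).fst
  have hsnd := (continuous_edgeBubbleField b).snd
  have hcont : Continuous fun x => dot (edgeBubbleField b x) (edgeBubbleField b x) :=
    (hfst.mul hfst).add (hsnd.mul hsnd)
  have hmid := eqOn_zero_of_setIntegral_eq_zero (isCompact_convexHull_range b)
    (convexHull_range_subset_closure_interior b) hcont.continuousOn
    (fun _ _ => dot_self_nonneg _) hint (midpoint_mem_convexHull_range b (0 + 1) (0 + 2))
  have hedge := (edgeBubbleField_midpoint b 0).symm.trans (dot_self_eq_zero.1 hmid)
  exact edge_ne_zero b 0 ((smul_eq_zero_iff_right (by norm_num)).1 hedge)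

end PlaneTriangle

section LineIntegral

variable {a b : ℝ × ℝ}

theorem eqOn_zero_of_lineIntegral_eq_zero (hab : a ≠ b) {f : ℝ × ℝ → ℝ}
    (hf : ContinuousOn f (segment ℝ a b)) (hf_nonneg : ∀ x ∈ segment ℝ a b, 0 ≤ f x)
    (hint : lineIntegral f a b = 0) : Set.EqOn f 0 (segment ℝ a b) := by
  have hlength : Real.sqrt ((b.1 - a.1) ^ 2 + (b.2 - a.2) ^ 2) ≠ 0 := by
    refine (Real.sqrt_ne_zero (by positivity)).2 fun h => hab (sub_eq_zero.1 ?_).symm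
    exact dot_self_eq_zero.1 (by simpa only [dot, ← sq, Prod.fst_sub, Prod.snd_sub] using h)
  rw [segment_eq_image] at hf hf_nonneg ⊢
  have hIcc : ∫ s in Set.Icc (0 : ℝ) 1, f ((1 - s) • a + s • b) = 0 := by
    rw [integral_Icc_eq_integral_Ioc, ← intervalIntegral.integral_of_le zero_le_one]
    exact (mul_eq_zero.1 hint).resolve_left hlength
  have hcont : ContinuousOn (fun s : ℝ => f ((1 - s) • a + s • b)) (Set.Icc 0 1) :=
    hf.comp (by fun_prop) (Set.mapsTo_image _ _)
  have hzero := eqOn_zero_of_setIntegral_eq_zero isCompact_Icc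
    (by rw [interior_Icc, closure_Ioo zero_ne_one]) hcont
    (fun s hs => hf_nonneg _ (Set.mem_image_of_mem _ hs)) hIcc
  rintro _ ⟨s, hs, rfl⟩
  exact hzero hs

theorem lineIntegral_congr {f g : ℝ × ℝ → ℝ} (hfg : Set.EqOn f g (segment ℝ a b)) :
    lineIntegral f a b = lineIntegral g a b := by
  refine congrArg _ (intervalIntegral.integral_congr fun s hs => hfg ?_)
  rw [Set.uIcc_of_le zero_le_one] at hs
  rw [segment_eq_image]
  exact Set.mem_image_of_mem _ hs

-- Testing against `γ = f` turns the moment into the integral of `f ^ 2`.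
theorem eqOn_zero_of_forall_lineIntegral_mul_eq_zero (hab : a ≠ b) {f : (ℝ × ℝ) →ᵃ[ℝ] ℝ}
    {g : ℝ × ℝ → ℝ} (hfg : Set.EqOn g f (segment ℝ a b))
    (hg : ∀ γ : (ℝ × ℝ) →ᵃ[ℝ] ℝ, lineIntegral (fun x => γ x * g x) a b = 0) :
    Set.EqOn f 0 (segment ℝ a b) := by
  have hcont : Continuous f := f.continuous_of_finiteDimensional
  have hint : lineIntegral (fun x => f x * f x) a b = 0 := by
    rw [← hg f]
    exact lineIntegral_congr fun x hx => by simp only [hfg hx]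
  intro x hx
  exact mul_self_eq_zero.1 (eqOn_zero_of_lineIntegral_eq_zero hab (hcont.mul hcont).continuousOn
    (fun _ _ => mul_self_nonneg _) hint hx)

theorem dot_affineMap_eq_zero_of_forall_lineIntegral_eq_zero (hab : a ≠ b)
    {p : (ℝ × ℝ) →ᵃ[ℝ] ℝ × ℝ} {w : ℝ × ℝ → ℝ × ℝ} {n : ℝ × ℝ}
    (hw : ∀ x ∈ segment ℝ a b, dot (w x) n = dot (p x) n)
    (hint : ∀ γ : (ℝ × ℝ) →ᵃ[ℝ] ℝ, lineIntegral (fun x => γ x * dot (w x) n) a b = 0) :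
    ∀ x ∈ segment ℝ a b, dot (p x) n = 0 := by
  have hcoe : ⇑((dotLinear n).toAffineMap.comp p) = fun x => dot (p x) n :=
    funext fun x => dotLinear_apply n (p x)
  have hzero := eqOn_zero_of_forall_lineIntegral_mul_eq_zero hab
    (f := (dotLinear n).toAffineMap.comp p) (by rwa [hcoe]) hint
  rwa [hcoe] at hzero

end LineIntegral

section Polynomial

theorem exists_affineMap_mul_eq_pow_mul_pow {i j : ℕ} (hij : i + j ≤ 2) :
    ∃ g h : (ℝ × ℝ) →ᵃ[ℝ] ℝ, ∀ x, x.1 ^ i * x.2 ^ j = g x * h x := by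
  let one : (ℝ × ℝ) →ᵃ[ℝ] ℝ := AffineMap.const ℝ _ 1
  let fst : (ℝ × ℝ) →ᵃ[ℝ] ℝ := (LinearMap.fst ℝ ℝ ℝ).toAffineMap
  let snd : (ℝ × ℝ) →ᵃ[ℝ] ℝ := (LinearMap.snd ℝ ℝ ℝ).toAffineMap
  have hi : i ≤ 2 := by omega
  have hj : j ≤ 2 := by omega
  interval_cases i <;> interval_cases j <;> try omega
  · exact ⟨one, one, fun x => by simp [one]⟩
  · exact ⟨one, snd, fun x => by simp [one, snd]⟩
  · exact ⟨snd, snd, fun x => by simp [snd, sq]⟩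
  · exact ⟨fst, one, fun x => by simp [one, fst]⟩
  · exact ⟨fst, snd, fun x => by simp [fst, snd]⟩
  · exact ⟨fst, fst, fun x => by simp [fst, sq]⟩

theorem pev_smul_mem_quadraticFunctions {W : Type*} [AddCommGroup W] [Module ℝ W]
    {P : MvPolynomial (Fin 2) ℝ} (hP : P.totalDegree ≤ 2) (c : W) :
    (fun x => pev P x • c) ∈ quadraticFunctions (ℝ × ℝ) W := by
  have hexpand : (fun x => pev P x • c) =
      ∑ d ∈ P.support, P.coeff d • fun x : ℝ × ℝ => (x.1 ^ d 0 * x.2 ^ d 1) • c := by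
    funext x
    simp [pev, MvPolynomial.eval_eq', Fin.prod_univ_two, Finset.sum_smul, smul_smul]
  rw [hexpand]
  refine Submodule.sum_smul_mem _ _ fun d hd => Submodule.subset_span ?_
  have hdegree : d 0 + d 1 ≤ 2 := by
    have := (MvPolynomial.le_totalDegree hd).trans hP
    rwa [Finsupp.sum_fintype _ _ fun _ => rfl, Fin.sum_univ_two] at this
  obtain ⟨g, h, hgh⟩ := exists_affineMap_mul_eq_pow_mul_pow hdegree
  exact ⟨g, (LinearMap.toSpanSingleton ℝ W c).toAffineMap.comp h, by simp [hgh, mul_smul]⟩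

theorem pev_prodMk_mem_quadraticFunctions {P Q : MvPolynomial (Fin 2) ℝ} (hP : P.totalDegree ≤ 2)
    (hQ : Q.totalDegree ≤ 2) :
    (fun x => (pev P x, pev Q x)) ∈ quadraticFunctions (ℝ × ℝ) (ℝ × ℝ) := by
  have hsplit : (fun x => (pev P x, pev Q x)) =
      (fun x => pev P x • ((1, 0) : ℝ × ℝ)) + fun x => pev Q x • ((0, 1) : ℝ × ℝ) := by
    ext x <;> simp
  rw [hsplit]
  exact add_mem (pev_smul_mem_quadraticFunctions hP _) (pev_smul_mem_quadraticFunctions hQ _)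

end Polynomial

/-- **Unisolvency of the local BDFM1 degrees of freedom.**
Let `w = p + q` with `p` affine (both components affine functions) and
`q ∈ Ŝ(K)` (components polynomial of total degree ≤ 2, normal component
vanishing on each edge). If all edge normal moments of `w` against affine
functions vanish, all interior moments of `w` against gradients of affine
functions vanish, and the moment of `w` against `∇⊥(λ₀λ₁λ₂)` vanishes,
then `w = 0`. -/
theorem bdfm1_unisolvency
    (v : Fin 3 → ℝ × ℝ) (hv : AffineIndependent ℝ v)
    (lam : Fin 3 → (ℝ × ℝ) →ᵃ[ℝ] ℝ)
    (hlam : ∀ i j : Fin 3, lam i (v j) = if i = j then 1 else 0)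
    (n : Fin 3 → ℝ × ℝ)
    (hn_unit : ∀ i : Fin 3, (n i).1 ^ 2 + (n i).2 ^ 2 = 1)
    (hn_normal : ∀ i : Fin 3, dot (n i) (v (i + 2) - v (i + 1)) = 0)
    (K : Set (ℝ × ℝ)) (hK : K = convexHull ℝ {v 0, v 1, v 2})
    (p : (ℝ × ℝ) →ᵃ[ℝ] ℝ × ℝ)
    (q : (ℝ × ℝ) → ℝ × ℝ)
    (hq_poly : ∃ P Q : MvPolynomial (Fin 2) ℝ, P.totalDegree ≤ 2 ∧
      Q.totalDegree ≤ 2 ∧ ∀ x : ℝ × ℝ, q x = (pev P x, pev Q x))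
    (hq_normal : ∀ i : Fin 3, ∀ x ∈ segment ℝ (v (i + 1)) (v (i + 2)),
      dot (q x) (n i) = 0)
    (w : (ℝ × ℝ) → ℝ × ℝ) (hw : ∀ x : ℝ × ℝ, w x = p x + q x)
    (hedge : ∀ γ : (ℝ × ℝ) →ᵃ[ℝ] ℝ, ∀ i : Fin 3,
      lineIntegral (fun x => γ x * dot (w x) (n i)) (v (i + 1)) (v (i + 2)) = 0)
    (hint : ∀ γ : (ℝ × ℝ) →ᵃ[ℝ] ℝ,
      ∫ x in K, dot (grad2 (⇑γ) x) (w x) = 0)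
    (hbubble :
      ∫ x in K, dot (perpGrad (fun y => lam 0 y * lam 1 y * lam 2 y) x) (w x)
        = 0) :
    ∀ x : ℝ × ℝ, w x = 0 := by
  obtain ⟨b, rfl⟩ := exists_affineBasis_coe_eq hv (by simp)
  obtain rfl : lam = b.coord := eq_coord_of_apply_eq_ite b hlam
  obtain rfl : K = convexHull ℝ (Set.range b) := by rw [hK, range_fin_three]
  have hn (i : Fin 3) : n i ≠ 0 := fun h => by simpa [h] using hn_unit i
  have hspan (i : Fin 3) (u : ℝ × ℝ) (hu : dot u (n i) = 0) : u ∈ Submodule.span ℝ {edge b i} :=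
    mem_span_edge_of_dot_eq_zero b (hn i) (hn_normal i) hu
  obtain ⟨P, Q, hP, hQ, hPQ⟩ := hq_poly
  have hq : q ∈ quadraticFunctions (ℝ × ℝ) (ℝ × ℝ) :=
    funext hPQ ▸ pev_prodMk_mem_quadraticFunctions hP hQ
  have hp_zero : p = 0 := IsTangential.affineMap_eq_zero fun i x hx => hspan i _ <|
    dot_affineMap_eq_zero_of_forall_lineIntegral_eq_zero (sub_ne_zero.1 (edge_ne_zero b i)).symm
      (fun y hy => by rw [hw, dot_add_left, hq_normal i y hy, add_zero]) (hedge · i) x hx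
  have hwq : w = q := funext fun x => by simp [hw, hp_zero]
  subst hwq
  have hwb : IsTangential b w := fun i x hx => hspan i _ (hq_normal i x hx)
  obtain ⟨c, hc⟩ := hwb.exists_eq_smul_edgeBubbleField volume hq fun f => by
    simpa only [dot_grad2, fderiv_affineMap_apply, LinearMap.toAffineMap_linear]
      using hint f.toAffineMap
  obtain ⟨κ, hκ, hperp⟩ := exists_perpGrad_prod_coord_eq_smul_edgeBubbleField b
  simp only [hc, hperp, dot_smul_smul, integral_const_mul] at hbubble
  have hcκ := (mul_eq_zero.1 hbubble).resolve_right (setIntegral_dot_edgeBubbleField_self_ne_zero b)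
  intro x
  rw [hc, (mul_eq_zero.1 hcκ).resolve_left hκ, zero_smul]
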